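/- Fix d, n, K ∈ ℕ with K ≥ 1 and λ, σ > 0. For each episode t = 1,…,n let φ_{t,1},…,φ_{t,m_t} ∈ ℝ^d be feature vectors with m_t ≤ K and ‖φ_{t,k}‖₂ ≤ 1 for all k, and define the positive definite matrices Σ_t ∈ ℝ^{d×d} by Σ_t^{-1} = (1/λ²) I + (1/σ²) Σ_{τ=1}^{t-1} Σ_{k=1}^{m_τ} φ_{τ,k} φ_{τ,k}ᵀ. Then Σ_{t=1}^n Σ_{k=1}^{m_t} √( φ_{t,k}ᵀ Σ_t φ_{t,k} ) ≤ K λ √( d n ln(1 + nKλ²/(dσ²)) / ln(1 + λ²/σ²) ). -/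

import Mathlib

open Matrix Finset

/-!
Write `a = 1 / λ²` and `b = 1 / σ²` for the prior and noise precisions. Adding a rank-one term
`b • v vᵀ` to a positive definite `A` multiplies its determinant by `1 + b * vᵀ A⁻¹ v`, and adding
further positive semidefinite terms never decreases it. Retaining only the widest feature `vₜ` of
each episode, the log-determinant of the precision matrix therefore grows by at least
`log (1 + b * wₜ)` in episode `t`, where `wₜ` is the squared width of `vₜ`. These increments
telescope, and AM-GM on the eigenvalues bounds the final log-determinant through the trace. As
`wₜ ≤ 1 / a` for features in the unit ball, concavity of the logarithm makes `wₜ` at most a constant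
multiple of `log (1 + b * wₜ)`, and Cauchy–Schwarz passes from `∑ wₜ` to `∑ √wₜ`.
-/

section Matrix

variable {ι κ R : Type*}

lemma posSemidef_smul_vecMulVec_self [Finite ι] {b : ℝ} (hb : 0 ≤ b) (v : ι → ℝ) :
    (b • vecMulVec v v).PosSemidef := by
  simpa only [star_trivial] using (posSemidef_vecMulVec_self_star v).smul hb

variable [Fintype ι] [DecidableEq ι]

lemma det_add_vecMulVec [CommRing R] {A : Matrix ι ι R} (hA : IsUnit A.det) (u v : ι → R) :
    (A + vecMulVec u v).det = A.det * (1 + v ⬝ᵥ A⁻¹ *ᵥ u) := by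
  rw [vecMulVec_eq Unit, det_add_replicateCol_mul_replicateRow (ι := Unit) hA, Matrix.mul_assoc,
    ← replicateCol_mulVec, det_unique (n := Unit), Matrix.add_apply, Matrix.one_apply_eq,
    replicateRow_mul_replicateCol_apply]

lemma det_add_smul_vecMulVec_self [CommRing R] {A : Matrix ι ι R} (hA : IsUnit A.det) (b : R)
    (v : ι → R) : (A + b • vecMulVec v v).det = A.det * (1 + b * (v ⬝ᵥ A⁻¹ *ᵥ v)) := by
  rw [← smul_vecMulVec, det_add_vecMulVec hA, mulVec_smul, dotProduct_smul, smul_eq_mul]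

variable {A B : Matrix ι ι ℝ} {b c : ℝ}

lemma dotProduct_inv_mulVec_nonneg (hA : A.PosDef) (v : ι → ℝ) : 0 ≤ v ⬝ᵥ A⁻¹ *ᵥ v := by
  simpa only [star_trivial] using hA.inv.posSemidef.dotProduct_mulVec_nonneg v

lemma det_le_det_add_smul_sum_vecMulVec_self (hA : A.PosDef) (hb : 0 ≤ b) (s : Finset κ)
    (v : κ → ι → ℝ) : A.det ≤ (A + b • ∑ k ∈ s, vecMulVec (v k) (v k)).det := by
  classical
  induction s using Finset.induction_on generalizing A with
  | empty => simp
  | insert k s hk ih =>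
    rw [sum_insert hk, smul_add, ← add_assoc]
    calc A.det ≤ A.det * (1 + b * (v k ⬝ᵥ A⁻¹ *ᵥ v k)) :=
          le_mul_of_one_le_right hA.det_pos.le
            (le_add_of_nonneg_right (mul_nonneg hb (dotProduct_inv_mulVec_nonneg hA _)))
      _ = (A + b • vecMulVec (v k) (v k)).det :=
          (det_add_smul_vecMulVec_self hA.det_pos.ne'.isUnit b _).symm
      _ ≤ _ := ih (hA.add_posSemidef (posSemidef_smul_vecMulVec_self hb _))

lemma dotProduct_inv_smul_one_add_mulVec_le (hc : 0 < c) (hB : B.PosSemidef) (v : ι → ℝ) :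
    v ⬝ᵥ (c • (1 : Matrix ι ι ℝ) + B)⁻¹ *ᵥ v ≤ c⁻¹ * (v ⬝ᵥ v) := by
  have hA : (c • (1 : Matrix ι ι ℝ) + B).PosDef := (PosDef.one.smul hc).add_posSemidef hB
  set x := (c • (1 : Matrix ι ι ℝ) + B)⁻¹ *ᵥ v with hx
  have hv : v = c • x + B *ᵥ x := by
    rw [← one_mulVec v, ← mul_nonsing_inv _ hA.det_pos.ne'.isUnit, ← mulVec_mulVec, ← hx,
      add_mulVec, smul_mulVec, one_mulVec]
  have hvx : v ⬝ᵥ x = c * (x ⬝ᵥ x) + x ⬝ᵥ B *ᵥ x := by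
    rw [dotProduct_comm]
    nth_rw 1 [hv]
    rw [dotProduct_add, dotProduct_smul, smul_eq_mul]
  have hBx : 0 ≤ x ⬝ᵥ B *ᵥ x := by
    simpa only [star_trivial] using hB.dotProduct_mulVec_nonneg x
  have hsq : 0 ≤ (v - c • x) ⬝ᵥ (v - c • x) := by
    simpa only [star_trivial] using dotProduct_star_self_nonneg (v - c • x)
  simp only [sub_dotProduct, dotProduct_sub, smul_dotProduct, dotProduct_smul, smul_eq_mul,
    dotProduct_comm x v] at hsq
  rw [le_inv_mul_iff₀ hc]
  nlinarith

lemma log_det_le_card_mul_log_trace_div_card [Nonempty ι] (hA : A.PosDef) :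
    Real.log A.det ≤ Fintype.card ι * Real.log (A.trace / Fintype.card ι) := by
  have hcard : (0 : ℝ) < Fintype.card ι := by exact_mod_cast Fintype.card_pos
  rw [hA.1.det_eq_prod_eigenvalues, hA.1.trace_eq_sum_eigenvalues]
  simp only [RCLike.ofReal_real_eq_id, id]
  rw [Real.log_prod fun i _ ↦ (hA.eigenvalues_pos i).ne', ← inv_mul_le_iff₀ hcard, mul_sum,
    div_eq_inv_mul, mul_sum]
  exact strictConcaveOn_log_Ioi.concaveOn.le_map_sum (fun _ _ ↦ by positivity)
    (by simp [hcard.ne']) fun i _ ↦ hA.eigenvalues_pos i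

end Matrix

section Real

lemma mul_log_one_add_le_mul_log_one_add {x y : ℝ} (hx : 0 ≤ x) (hxy : x ≤ y) :
    x * Real.log (1 + y) ≤ y * Real.log (1 + x) := by
  obtain rfl | hy := (hx.trans hxy).eq_or_lt
  · simp [le_antisymm hxy hx]
  have hconc := strictConcaveOn_log_Ioi.concaveOn.2 (Set.mem_Ioi.2 one_pos)
    (Set.mem_Ioi.2 (by positivity : 0 < 1 + y)) (sub_nonneg.2 ((div_le_one hy).2 hxy))
    (div_nonneg hx hy.le) (sub_add_cancel 1 (x / y))
  have hcomb : (1 - x / y) * 1 + x / y * (1 + y) = 1 + x := by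
    field_simp
    ring
  simp only [smul_eq_mul, Real.log_one, mul_zero, zero_add, hcomb] at hconc
  rwa [div_mul_eq_mul_div, div_le_iff₀' hy] at hconc

lemma sum_sqrt_le_sqrt_card_mul_sum {α : Type*} {s : Finset α} {f : α → ℝ}
    (hf : ∀ i ∈ s, 0 ≤ f i) : ∑ i ∈ s, √(f i) ≤ √(#s * ∑ i ∈ s, f i) := by
  refine Real.le_sqrt_of_sq_le (sq_sum_le_card_mul_sum_sq.trans_eq ?_)
  rw [sum_congr rfl fun i hi ↦ Real.sq_sqrt (hf i hi)]

end Real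

lemma sum_Iic_sub_Iio_of_isLowerSet {τ G : Type*} [LinearOrder τ] [LocallyFiniteOrderBot τ]
    [AddCommGroup G] (f : Finset τ → G) {s : Finset τ} (hs : IsLowerSet (s : Set τ)) :
    ∑ t ∈ s, (f (Iic t) - f (Iio t)) = f s - f ∅ := by
  induction s using Finset.induction_on_max with
  | empty => simp
  | insert t s ht ih =>
    have hIio : Iio t = s := by
      ext u
      refine ⟨fun hu ↦ ?_, fun hu ↦ mem_Iio.2 (ht u hu)⟩
      have hu' : u ∈ insert t s := hs (mem_Iio.1 hu).le (mem_insert_self t s)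
      exact (mem_insert.1 hu').resolve_left (mem_Iio.1 hu).ne
    rw [sum_insert fun h ↦ (ht t h).false, ← Iio_insert, hIio,
      ih (hIio ▸ by simpa using isLowerSet_Iio t), sub_add_sub_cancel]

section MaxWidthSq

variable {ι κ : Type*} [Fintype ι] [DecidableEq ι]

/-- The largest squared confidence width `vᵀ A⁻¹ v` among the features `v k`, where `A` is a
precision matrix. It is `0` when there are no features. -/
noncomputable def maxWidthSq (A : Matrix ι ι ℝ) (v : κ → ι → ℝ) : ℝ :=
  ⨆ k, v k ⬝ᵥ A⁻¹ *ᵥ v k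

variable {A : Matrix ι ι ℝ} {b : ℝ}

lemma maxWidthSq_nonneg (hA : A.PosDef) (v : κ → ι → ℝ) : 0 ≤ maxWidthSq A v :=
  Real.iSup_nonneg fun k ↦ dotProduct_inv_mulVec_nonneg hA (v k)

lemma sum_sqrt_le_card_mul_sqrt_maxWidthSq [Fintype κ] (A : Matrix ι ι ℝ) (v : κ → ι → ℝ) :
    ∑ k, √(v k ⬝ᵥ A⁻¹ *ᵥ v k) ≤ Fintype.card κ * √(maxWidthSq A v) := by
  rw [← nsmul_eq_mul]
  exact sum_le_card_nsmul _ _ _ fun k _ ↦ Real.sqrt_le_sqrt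
    (le_ciSup (f := fun k ↦ v k ⬝ᵥ A⁻¹ *ᵥ v k) (Set.finite_range _).bddAbove k)

lemma det_mul_one_add_maxWidthSq_le [Fintype κ] (hA : A.PosDef) (hb : 0 ≤ b) (v : κ → ι → ℝ) :
    A.det * (1 + b * maxWidthSq A v) ≤ (A + b • ∑ k, vecMulVec (v k) (v k)).det := by
  classical
  rcases isEmpty_or_nonempty κ with _ | _
  · simp [maxWidthSq]
  obtain ⟨k, hk⟩ := exists_eq_ciSup_of_finite (f := fun k ↦ v k ⬝ᵥ A⁻¹ *ᵥ v k)
  rw [maxWidthSq, ← hk, ← det_add_smul_vecMulVec_self hA.det_pos.ne'.isUnit,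
    ← add_sum_erase _ _ (mem_univ k), smul_add, ← add_assoc]
  exact det_le_det_add_smul_sum_vecMulVec_self
    (hA.add_posSemidef (posSemidef_smul_vecMulVec_self hb _)) hb _ _

end MaxWidthSq

section Precision

variable {ι τ : Type*} {κ : τ → Type*} [∀ t, Fintype (κ t)]

/-- The posterior precision matrix of Bayesian linear regression after the batches of features
`φ t`, `t ∈ s`, have been observed, for prior precision `a` (in the theorem `1 / λ²`) and noise
precision `b` (in the theorem `1 / σ²`). -/
def precision [DecidableEq ι] (a b : ℝ) (φ : (t : τ) → κ t → ι → ℝ) (s : Finset τ) :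
    Matrix ι ι ℝ :=
  a • (1 : Matrix ι ι ℝ) + b • ∑ t ∈ s, ∑ k, vecMulVec (φ t k) (φ t k)

variable {a b : ℝ} {φ : (t : τ) → κ t → ι → ℝ}

lemma posSemidef_smul_sum_vecMulVec_self [Finite ι] (hb : 0 ≤ b)
    (φ : (t : τ) → κ t → ι → ℝ) (s : Finset τ) :
    (b • ∑ t ∈ s, ∑ k, vecMulVec (φ t k) (φ t k)).PosSemidef := by
  simp only [smul_sum]
  exact posSemidef_sum _ fun t _ ↦ posSemidef_sum _ fun k _ ↦ posSemidef_smul_vecMulVec_self hb _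

variable [DecidableEq ι]

lemma precision_posDef [Finite ι] (ha : 0 < a) (hb : 0 ≤ b)
    (φ : (t : τ) → κ t → ι → ℝ) (s : Finset τ) : (precision a b φ s).PosDef :=
  (PosDef.one.smul ha).add_posSemidef (posSemidef_smul_sum_vecMulVec_self hb φ s)

lemma precision_Iic [LinearOrder τ] [LocallyFiniteOrderBot τ] (a b : ℝ)
    (φ : (t : τ) → κ t → ι → ℝ) (t : τ) :
    precision a b φ (Iic t) =
      precision a b φ (Iio t) + b • ∑ k, vecMulVec (φ t k) (φ t k) := by
  rw [precision, precision, ← Iio_insert, sum_insert (by simp), smul_add, add_assoc,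
    add_comm (b • ∑ k, _)]

variable [Fintype ι]

lemma maxWidthSq_precision_le (ha : 0 < a) (hb : 0 ≤ b) (s : Finset τ) {κ' : Type*}
    {v : κ' → ι → ℝ} (hv : ∀ k, v k ⬝ᵥ v k ≤ 1) : maxWidthSq (precision a b φ s) v ≤ a⁻¹ :=
  Real.iSup_le (fun k ↦
    (dotProduct_inv_smul_one_add_mulVec_le ha
      (posSemidef_smul_sum_vecMulVec_self hb φ s) (v k)).trans
      (mul_le_of_le_one_right (inv_nonneg.2 ha.le) (hv k))) (inv_nonneg.2 ha.le)

lemma trace_precision_le (hb : 0 ≤ b) {s : Finset τ}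
    (hφ : ∀ t ∈ s, ∀ k, φ t k ⬝ᵥ φ t k ≤ 1) :
    (precision a b φ s).trace ≤ a * Fintype.card ι + b * ∑ t ∈ s, (Fintype.card (κ t) : ℝ) := by
  simp only [precision, trace_add, trace_smul, trace_one, trace_sum, trace_vecMulVec, smul_eq_mul]
  gcongr with t ht
  exact (sum_le_card_nsmul _ _ 1 fun k _ ↦ hφ t ht k).trans_eq (by simp)

lemma log_det_precision_le [Nonempty ι] (ha : 0 < a) (hb : 0 ≤ b) {s : Finset τ}
    (hφ : ∀ t ∈ s, ∀ k, φ t k ⬝ᵥ φ t k ≤ 1) :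
    Real.log (precision a b φ s).det ≤ Fintype.card ι * Real.log a + Fintype.card ι *
      Real.log (1 + b * (∑ t ∈ s, (Fintype.card (κ t) : ℝ)) / (a * Fintype.card ι)) := by
  have hcard : (0 : ℝ) < Fintype.card ι := by exact_mod_cast Fintype.card_pos
  have hpos := precision_posDef ha hb φ s
  have htrace : (precision a b φ s).trace / Fintype.card ι ≤
      a * (1 + b * (∑ t ∈ s, (Fintype.card (κ t) : ℝ)) / (a * Fintype.card ι)) := by
    rw [div_le_iff₀ hcard]
    refine (trace_precision_le hb hφ).trans_eq ?_
    field_simp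
  rw [← mul_add, ← Real.log_mul ha.ne' (by positivity)]
  exact (log_det_le_card_mul_log_trace_div_card hpos).trans <|
    mul_le_mul_of_nonneg_left (Real.log_le_log (div_pos hpos.trace_pos hcard) htrace) hcard.le

variable [LinearOrder τ] [LocallyFiniteOrderBot τ]

lemma log_one_add_maxWidthSq_le (ha : 0 < a) (hb : 0 ≤ b) (φ : (t : τ) → κ t → ι → ℝ) (t : τ) :
    Real.log (1 + b * maxWidthSq (precision a b φ (Iio t)) (φ t)) ≤
      Real.log (precision a b φ (Iic t)).det - Real.log (precision a b φ (Iio t)).det := by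
  have hA := precision_posDef ha hb φ (Iio t)
  have hfactor : 0 < 1 + b * maxWidthSq (precision a b φ (Iio t)) (φ t) :=
    add_pos_of_pos_of_nonneg one_pos (mul_nonneg hb (maxWidthSq_nonneg hA _))
  rw [le_sub_iff_add_le', ← Real.log_mul hA.det_pos.ne' hfactor.ne', precision_Iic]
  exact Real.log_le_log (mul_pos hA.det_pos hfactor) (det_mul_one_add_maxWidthSq_le hA hb _)

variable [Fintype τ]

lemma sum_sum_sqrt_le_mul_sqrt_sum_maxWidthSq (ha : 0 < a) (hb : 0 ≤ b) {K : ℕ}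
    (hκ : ∀ t, Fintype.card (κ t) ≤ K) (φ : (t : τ) → κ t → ι → ℝ) :
    ∑ t, ∑ k, √(φ t k ⬝ᵥ (precision a b φ (Iio t))⁻¹ *ᵥ φ t k) ≤
      K * √(Fintype.card τ * ∑ t, maxWidthSq (precision a b φ (Iio t)) (φ t)) := by
  calc _ ≤ ∑ t, K * √(maxWidthSq (precision a b φ (Iio t)) (φ t)) := by
        refine sum_le_sum fun t _ ↦ (sum_sqrt_le_card_mul_sqrt_maxWidthSq _ _).trans ?_
        gcongr
        exact hκ t
    _ ≤ _ := by
        rw [← mul_sum]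
        gcongr
        exact sum_sqrt_le_sqrt_card_mul_sum fun t _ ↦
          maxWidthSq_nonneg (precision_posDef ha hb φ (Iio t)) (φ t)

variable [Nonempty ι]

lemma sum_log_one_add_maxWidthSq_le (ha : 0 < a) (hb : 0 ≤ b)
    (hφ : ∀ t k, φ t k ⬝ᵥ φ t k ≤ 1) :
    ∑ t, Real.log (1 + b * maxWidthSq (precision a b φ (Iio t)) (φ t)) ≤
      Fintype.card ι *
        Real.log (1 + b * (∑ t, (Fintype.card (κ t) : ℝ)) / (a * Fintype.card ι)) := by
  have htelescope := sum_Iic_sub_Iio_of_isLowerSet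
    (fun s ↦ Real.log (precision a b φ s).det) (s := univ) (by simp [isLowerSet_univ])
  have hempty : Real.log (precision a b φ ∅).det = Fintype.card ι * Real.log a := by
    simp [precision]
  refine (sum_le_sum fun t _ ↦ log_one_add_maxWidthSq_le ha hb φ t).trans ?_
  rw [htelescope, hempty, sub_le_iff_le_add']
  exact log_det_precision_le ha hb fun t _ ↦ hφ t

lemma sum_maxWidthSq_le (ha : 0 < a) (hb : 0 < b) (hφ : ∀ t k, φ t k ⬝ᵥ φ t k ≤ 1) :
    ∑ t, maxWidthSq (precision a b φ (Iio t)) (φ t) ≤ a⁻¹ * (Fintype.card ι *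
      Real.log (1 + b * (∑ t, (Fintype.card (κ t) : ℝ)) / (a * Fintype.card ι)) /
        Real.log (1 + b * a⁻¹)) := by
  have hlog : 0 < Real.log (1 + b * a⁻¹) :=
    Real.log_pos (lt_add_of_pos_right 1 (by positivity))
  have hwidth (t : τ) : maxWidthSq (precision a b φ (Iio t)) (φ t) * Real.log (1 + b * a⁻¹) ≤
      a⁻¹ * Real.log (1 + b * maxWidthSq (precision a b φ (Iio t)) (φ t)) := by
    have hnonneg := maxWidthSq_nonneg (precision_posDef ha hb.le φ (Iio t)) (φ t)
    have hle := maxWidthSq_precision_le (φ := φ) ha hb.le (Iio t) (hφ t)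
    refine le_of_mul_le_mul_left ?_ hb
    simpa only [mul_assoc] using mul_log_one_add_le_mul_log_one_add (mul_nonneg hb.le hnonneg)
      (mul_le_mul_of_nonneg_left hle hb.le)
  rw [← mul_div_assoc, le_div_iff₀ hlog, sum_mul]
  refine (sum_le_sum fun t _ ↦ hwidth t).trans ?_
  rw [← mul_sum]
  exact mul_le_mul_of_nonneg_left (sum_log_one_add_maxWidthSq_le ha hb.le hφ) (by positivity)

lemma sum_maxWidthSq_le_of_card_le {K : ℕ} {lam σ : ℝ} (hlam : 0 < lam) (hσ : 0 < σ)
    (hκ : ∀ t, Fintype.card (κ t) ≤ K) (hφ : ∀ t k, φ t k ⬝ᵥ φ t k ≤ 1) :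
    ∑ t, maxWidthSq (precision (lam ^ 2)⁻¹ (σ ^ 2)⁻¹ φ (Iio t)) (φ t) ≤
      lam ^ 2 * (Fintype.card ι *
        Real.log (1 + Fintype.card τ * K * lam ^ 2 / (Fintype.card ι * σ ^ 2)) /
          Real.log (1 + lam ^ 2 / σ ^ 2)) := by
  have hcard : ∑ t, (Fintype.card (κ t) : ℝ) ≤ Fintype.card τ * K := by
    rw [← nsmul_eq_mul]
    exact sum_le_card_nsmul _ _ _ fun t _ ↦ by exact_mod_cast hκ t
  have hratio : (σ ^ 2)⁻¹ * (∑ t, (Fintype.card (κ t) : ℝ)) / ((lam ^ 2)⁻¹ * Fintype.card ι) ≤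
      Fintype.card τ * K * lam ^ 2 / (Fintype.card ι * σ ^ 2) := by
    refine (div_le_div_of_nonneg_right (mul_le_mul_of_nonneg_left hcard (by positivity))
      (by positivity)).trans_eq ?_
    field_simp
  have hlog : 0 ≤ Real.log (1 + lam ^ 2 / σ ^ 2) :=
    Real.log_nonneg (le_add_of_nonneg_right (by positivity))
  refine (sum_maxWidthSq_le (inv_pos.2 (pow_pos hlam 2)) (inv_pos.2 (pow_pos hσ 2)) hφ).trans ?_
  rw [inv_inv, inv_mul_eq_div (σ ^ 2) (lam ^ 2)]
  gcongr

theorem stmt_6_general {K : ℕ} {lam σ : ℝ} (hlam : 0 < lam) (hσ : 0 < σ)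
    (hκ : ∀ t, Fintype.card (κ t) ≤ K) (hφ : ∀ t k, φ t k ⬝ᵥ φ t k ≤ 1) :
    ∑ t, ∑ k, √(φ t k ⬝ᵥ (precision (lam ^ 2)⁻¹ (σ ^ 2)⁻¹ φ (Iio t))⁻¹ *ᵥ φ t k) ≤
      K * lam * √(Fintype.card ι * Fintype.card τ *
        Real.log (1 + Fintype.card τ * K * lam ^ 2 / (Fintype.card ι * σ ^ 2)) /
          Real.log (1 + lam ^ 2 / σ ^ 2)) := by
  refine (sum_sum_sqrt_le_mul_sqrt_sum_maxWidthSq (inv_pos.2 (pow_pos hlam 2))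
    (inv_nonneg.2 (sq_nonneg σ)) hκ φ).trans ?_
  rw [mul_assoc (K : ℝ)]
  refine mul_le_mul_of_nonneg_left ?_ K.cast_nonneg
  calc _ ≤ √(Fintype.card τ * (lam ^ 2 * _)) := Real.sqrt_le_sqrt <|
        mul_le_mul_of_nonneg_left (sum_maxWidthSq_le_of_card_le hlam hσ hκ hφ) (Nat.cast_nonneg _)
    _ = √(lam ^ 2 * (Fintype.card ι * Fintype.card τ *
          Real.log (1 + Fintype.card τ * K * lam ^ 2 / (Fintype.card ι * σ ^ 2)) /
            Real.log (1 + lam ^ 2 / σ ^ 2))) := by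
        congr 1
        ring
    _ = _ := by rw [Real.sqrt_mul (sq_nonneg lam), Real.sqrt_sq hlam.le]

end Precision

/-- worst-case bound on the sum of confidence widths. With
Σ_t⁻¹ = (1/λ²) I + (1/σ²) Σ_{τ<t} Σ_k φ_{τ,k} φ_{τ,k}ᵀ, m_t ≤ K, ‖φ_{t,k}‖₂ ≤ 1:
Σ_{t=1}^n Σ_{k=1}^{m_t} √( φ_{t,k}ᵀ Σ_t φ_{t,k} )
  ≤ K λ √( d n ln(1 + nKλ²/(dσ²)) / ln(1 + λ²/σ²) ). -/
theorem stmt_6 {d n K : ℕ} (hd : 0 < d) (hK : 1 ≤ K) (lam σ : ℝ)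
    (hlam : 0 < lam) (hσ : 0 < σ)
    (m : Fin n → ℕ) (hm : ∀ t, m t ≤ K)
    (φ : (t : Fin n) → Fin (m t) → Fin d → ℝ)
    (hφ : ∀ t k, Real.sqrt (φ t k ⬝ᵥ φ t k) ≤ 1)
    (Sig : Fin n → Matrix (Fin d) (Fin d) ℝ)
    (hSig : ∀ t, Sig t =
      ((lam ^ 2)⁻¹ • (1 : Matrix (Fin d) (Fin d) ℝ) +
        (σ ^ 2)⁻¹ • ∑ τ ∈ Finset.Iio t, ∑ k, vecMulVec (φ τ k) (φ τ k))⁻¹) :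
    ∑ t, ∑ k, Real.sqrt (φ t k ⬝ᵥ (Sig t).mulVec (φ t k)) ≤
      K * lam * Real.sqrt (d * n * Real.log (1 + n * K * lam ^ 2 / (d * σ ^ 2)) /
        Real.log (1 + lam ^ 2 / σ ^ 2)) := by
  have : Nonempty (Fin d) := ⟨⟨0, hd⟩⟩
  simpa [hSig, precision] using stmt_6_general (κ := fun t ↦ Fin (m t)) (φ := φ) hlam hσ
    (by simpa using hm) fun t k ↦ Real.sqrt_le_one.1 (hφ t k)
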